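/- arXiv:1310.4618 — 2 statements merged into one kernel-verified Lean document; each statement's English description precedes it below -/
import Mathlib

section
/- The map Q preserves the product structure: if R = R₁ + R₂ ∈ S²_B(⋀²ℝ^{n₁+n₂}) is a product curvature operator with factors R_i ∈ S²_B(⋀²ℝ^{n_i}), then Q(R) = Q(R₁) + Q(R₂) is again a product curvature operator, whose factors are Q(R₁) computed in S²_B(⋀²ℝ^{n₁}) and Q(R₂) computed in S²_B(⋀²ℝ^{n₂}). -/
open scoped BigOperators
open Matrix Filter

noncomputable section

/-- `so n`: the Lie algebra of real skew-symmetric `n × n` matrices, as a submodule of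
matrices.  It is the model for `⋀²ℝⁿ` under the identification `x ∧ y ↦ x yᵀ - y xᵀ`,
i.e. `(x ∧ y)(z) = ⟨y,z⟩x - ⟨x,z⟩y`. -/
def so (n : ℕ) : Submodule ℝ (Matrix (Fin n) (Fin n) ℝ) where
  carrier := {A | Aᵀ = -A}
  add_mem' := fun {a b} ha hb => by
    simp only [Set.mem_setOf_eq] at *
    rw [Matrix.transpose_add, ha, hb, neg_add]
  zero_mem' := by simp
  smul_mem' := fun c {a} ha => by
    simp only [Set.mem_setOf_eq] at *
    rw [Matrix.transpose_smul, ha, smul_neg]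

lemma mem_so {n : ℕ} {A : Matrix (Fin n) (Fin n) ℝ} : A ∈ so n ↔ Aᵀ = -A := Iff.rfl

lemma so_skew {n : ℕ} (X : so n) : (X.1)ᵀ = -X.1 := mem_so.mp X.2

lemma so_skew' {n : ℕ} (X : so n) (i j : Fin n) : X.1 j i = -X.1 i j := by
  have h := congrFun (congrFun (so_skew X) i) j
  simpa [Matrix.transpose_apply] using h

/-- The Lie bracket (matrix commutator) on `so n`. -/
def brkt {n : ℕ} (X Y : so n) : so n :=
  ⟨X.1 * Y.1 - Y.1 * X.1, by
    rw [mem_so, Matrix.transpose_sub, Matrix.transpose_mul, Matrix.transpose_mul,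
      so_skew X, so_skew Y]
    simp [neg_sub]⟩

/-- The inner product `⟨A, B⟩ = -(1/2) tr (A B)` on `so n ≅ ⋀²ℝⁿ`, for which
`{e_i ∧ e_j : i < j}` is orthonormal. -/
def ip {n : ℕ} (X Y : so n) : ℝ := -(1 / 2) * (X.1 * Y.1).trace

/-- `ip X` as a linear functional. -/
def ipL {n : ℕ} (X : so n) : so n →ₗ[ℝ] ℝ where
  toFun Y := ip X Y
  map_add' Y Z := by
    simp [ip, Matrix.mul_add, Matrix.trace_add]
    ring
  map_smul' c Y := by
    simp [ip, Matrix.mul_smul, Matrix.trace_smul]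
    ring

/-- The wedge `x ∧ y` of two vectors, as an element of `so n`. -/
def wedgeVec {n : ℕ} (x y : Fin n → ℝ) : so n :=
  ⟨Matrix.of fun i j => x i * y j - y i * x j, by
    rw [mem_so]
    ext i j
    simp [Matrix.transpose_apply]
    ring⟩

/-- Index set for the standard orthonormal basis `{e_i ∧ e_j : i < j}` of `so n`. -/
def pairs (n : ℕ) : Finset (Fin n × Fin n) := Finset.univ.filter (fun p => p.1 < p.2)

/-- Standard basis vector of `ℝⁿ`. -/
def stdVec {n : ℕ} (i : Fin n) : Fin n → ℝ := Pi.single i 1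

/-- The standard orthonormal basis element `e_i ∧ e_j` of `so n`. -/
def omegaB {n : ℕ} (p : Fin n × Fin n) : so n := wedgeVec (stdVec p.1) (stdVec p.2)

/-- Hamilton's sharp product `A # B` of self-adjoint endomorphisms of `⋀²ℝⁿ ≅ so n`:
`⟨(A # B)(φ), ψ⟩ = (1/2) Σ_{α,β} ⟨[A ω_α, B ω_β], φ⟩ ⟨[ω_α, ω_β], ψ⟩`
over the orthonormal basis `{ω_α} = {e_i ∧ e_j : i < j}`. -/
def sharp {n : ℕ} (A B : Module.End ℝ (so n)) : Module.End ℝ (so n) :=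
  (1 / 2 : ℝ) • ∑ p ∈ pairs n, ∑ q ∈ pairs n,
    (ipL (brkt (A (omegaB p)) (B (omegaB q)))).smulRight (brkt (omegaB p) (omegaB q))

/-- The bilinear map `Q(A,B) = (1/2)(AB + BA) + A # B`. -/
def Qbil {n : ℕ} (A B : Module.End ℝ (so n)) : Module.End ℝ (so n) :=
  (1 / 2 : ℝ) • (A * B + B * A) + sharp A B

/-- `Q(R) = R² + R # R`. -/
def Qop {n : ℕ} (R : Module.End ℝ (so n)) : Module.End ℝ (so n) := R * R + sharp R R

/-- Self-adjointness of an endomorphism of `so n ≅ ⋀²ℝⁿ`. -/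
def IsSelfAdjointCO {n : ℕ} (R : Module.End ℝ (so n)) : Prop :=
  ∀ X Y : so n, ip (R X) Y = ip X (R Y)

/-- The first Bianchi identity. -/
def SatBianchi {n : ℕ} (R : Module.End ℝ (so n)) : Prop :=
  ∀ x y z w : Fin n → ℝ,
    ip (R (wedgeVec x y)) (wedgeVec z w) + ip (R (wedgeVec y z)) (wedgeVec x w)
      + ip (R (wedgeVec z x)) (wedgeVec y w) = 0

/-- Algebraic curvature operators: self-adjoint endomorphisms of `⋀²ℝⁿ` satisfying the
first Bianchi identity.  `IsACO R` says `R ∈ S²_B(⋀²ℝⁿ)`. -/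
def IsACO {n : ℕ} (R : Module.End ℝ (so n)) : Prop := IsSelfAdjointCO R ∧ SatBianchi R

/-- The Ricci tensor of `R`, `Ric(R)_{ij} = Σ_k ⟨R(e_i ∧ e_k), e_j ∧ e_k⟩`. -/
def RicM {n : ℕ} (R : Module.End ℝ (so n)) : Matrix (Fin n) (Fin n) ℝ :=
  Matrix.of fun i j => ∑ k, ip (R (wedgeVec (stdVec i) (stdVec k))) (wedgeVec (stdVec j) (stdVec k))

/-- The scalar curvature `s(R) = tr Ric(R)`. -/
def scal {n : ℕ} (R : Module.End ℝ (so n)) : ℝ := (RicM R).trace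

/-- `‖Ric(R)‖² = tr (Ric(R)²)`. -/
def ricNormSq {n : ℕ} (R : Module.End ℝ (so n)) : ℝ := (RicM R * RicM R).trace

/-- The traceless Ricci tensor `Ric₀(R)`. -/
def Ric0M {n : ℕ} (R : Module.End ℝ (so n)) : Matrix (Fin n) (Fin n) ℝ :=
  RicM R - (scal R / n) • (1 : Matrix (Fin n) (Fin n) ℝ)

/-- `R` is Einstein if `Ric(R)` is a scalar multiple of the identity of `ℝⁿ`. -/
def IsEinstein {n : ℕ} (R : Module.End ℝ (so n)) : Prop :=
  ∃ c : ℝ, RicM R = c • (1 : Matrix (Fin n) (Fin n) ℝ)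

lemma wedgeEnd_key {n : ℕ} (A B : Matrix (Fin n) (Fin n) ℝ) (M : so n) :
    (A * M.1 * Bᵀ + B * M.1 * Aᵀ)ᵀ = -(A * M.1 * Bᵀ + B * M.1 * Aᵀ) := by
  have hM := so_skew M
  rw [Matrix.transpose_add, Matrix.transpose_mul, Matrix.transpose_mul,
    Matrix.transpose_mul, Matrix.transpose_mul, Matrix.transpose_transpose,
    Matrix.transpose_transpose, hM]
  simp only [Matrix.mul_neg, Matrix.neg_mul, Matrix.mul_assoc, neg_add]
  abel

/-- The wedge `A ∧ B` of two endomorphisms of `ℝⁿ`, as an endomorphism of `⋀²ℝⁿ ≅ so n`: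
`(A ∧ B)(v ∧ w) = (1/2)(Av ∧ Bw + Bv ∧ Aw)`, i.e. `M ↦ (1/2)(A M Bᵀ + B M Aᵀ)`. -/
def wedgeEnd {n : ℕ} (A B : Matrix (Fin n) (Fin n) ℝ) : Module.End ℝ (so n) where
  toFun M := ⟨(1 / 2 : ℝ) • (A * M.1 * Bᵀ + B * M.1 * Aᵀ), by
    rw [mem_so, Matrix.transpose_smul, wedgeEnd_key, smul_neg]⟩
  map_add' M N := by
    apply Subtype.ext
    simp [Matrix.mul_add, Matrix.add_mul, smul_add]
    abel
  map_smul' c M := by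
    apply Subtype.ext
    simp [Matrix.mul_smul, Matrix.smul_mul, smul_smul, mul_comm]

/-- Inner product `⟨A, B⟩ = tr(A ∘ B)` on endomorphisms of `⋀²ℝⁿ` (the Frobenius inner
product for self-adjoint operators). -/
def endIP {n : ℕ} (A B : Module.End ℝ (so n)) : ℝ := LinearMap.trace ℝ ↥(so n) (A * B)

/-- Norm of an endomorphism of `⋀²ℝⁿ` induced by `endIP`. -/
def endNorm {n : ℕ} (A : Module.End ℝ (so n)) : ℝ := Real.sqrt (endIP A A)

/-- Huisken's trilinear form `tri(A,B,C) = tr((AB + BA + 2 A#B) ∘ C) = 2⟨Q(A,B), C⟩`. -/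
def tri {n : ℕ} (A B C : Module.End ℝ (so n)) : ℝ :=
  LinearMap.trace ℝ ↥(so n) ((A * B + B * A + (2 : ℝ) • sharp A B) * C)

/-- The identity component `R_I = (s(R)/(n(n-1))) id ∧ id` of a curvature operator. -/
def compI {n : ℕ} (R : Module.End ℝ (so n)) : Module.End ℝ (so n) :=
  (scal R / ((n : ℝ) * ((n : ℝ) - 1))) • 1

/-- The traceless-Ricci component `R_{Ric₀} = (2/(n-2)) Ric₀(R) ∧ id`. -/
def compRic0 {n : ℕ} (R : Module.End ℝ (so n)) : Module.End ℝ (so n) :=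
  (2 / ((n : ℝ) - 2)) • wedgeEnd (Ric0M R) 1

/-- The Weyl component `R_W = R - R_I - R_{Ric₀}`. -/
def compW {n : ℕ} (R : Module.End ℝ (so n)) : Module.End ℝ (so n) := R - compI R - compRic0 R

/-- The derivative `DQ̃(R)` of the normalized vector field
`Q̃(R) = Q(R) - ‖Ric R‖² R` at `R`, applied to `A`:
`DQ̃(R)(A) = 2Q(R,A) - ‖Ric R‖² A - 2 tr(Ric R · Ric A) R`. -/
def DQt {n : ℕ} (R A : Module.End ℝ (so n)) : Module.End ℝ (so n) :=
  (2 : ℝ) • Qbil R A - ricNormSq R • A - (2 * (RicM R * RicM A).trace) • R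


/-- Extension of a vector of `ℝ^{n₁}` by zero to `ℝ^{n₁+n₂}`. -/
def inlV {n₁ n₂ : ℕ} (v : Fin n₁ → ℝ) : Fin (n₁ + n₂) → ℝ :=
  fun i => if h : (i : ℕ) < n₁ then v ⟨i, h⟩ else 0

/-- Extension of a vector of `ℝ^{n₂}` by zero to `ℝ^{n₁+n₂}` (into the second factor). -/
def inrV {n₁ n₂ : ℕ} (w : Fin n₂ → ℝ) : Fin (n₁ + n₂) → ℝ :=
  fun i => if h : (i : ℕ) < n₁ then 0 else w ⟨(i : ℕ) - n₁, by omega⟩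

lemma inrV_aux {n₁ n₂ : ℕ} (i : Fin (n₁ + n₂)) (h : ¬ (i : ℕ) < n₁) :
    (i : ℕ) - n₁ < n₂ := by omega

/-- Embedding `so n₁ → so (n₁ + n₂)` as the upper-left block. -/
def embSoL {n₁ n₂ : ℕ} (M : so n₁) : so (n₁ + n₂) :=
  ⟨Matrix.of fun i j =>
      if hi : (i : ℕ) < n₁ then
        (if hj : (j : ℕ) < n₁ then M.1 ⟨i, hi⟩ ⟨j, hj⟩ else 0)
      else 0, by
    rw [mem_so]
    ext i j
    simp only [Matrix.transpose_apply, Matrix.of_apply, Matrix.neg_apply]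
    by_cases hi : (i : ℕ) < n₁ <;> by_cases hj : (j : ℕ) < n₁ <;>
      simp [hi, hj]
    exact so_skew' M _ _⟩

/-- Embedding `so n₂ → so (n₁ + n₂)` as the lower-right block. -/
def embSoR {n₁ n₂ : ℕ} (M : so n₂) : so (n₁ + n₂) :=
  ⟨Matrix.of fun i j =>
      if hi : (i : ℕ) < n₁ then 0
      else if hj : (j : ℕ) < n₁ then 0
      else M.1 ⟨(i : ℕ) - n₁, inrV_aux i hi⟩ ⟨(j : ℕ) - n₁, inrV_aux j hj⟩, by
    rw [mem_so]
    ext i j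
    simp only [Matrix.transpose_apply, Matrix.of_apply, Matrix.neg_apply]
    by_cases hi : (i : ℕ) < n₁ <;> by_cases hj : (j : ℕ) < n₁ <;>
      simp [hi, hj]
    exact so_skew' M _ _⟩

/-- `R ∈ S²_B(⋀²ℝ^{n₁+n₂})` is the product curvature operator of `R₁` and `R₂`:
`R(v ∧ w) = R_i(v ∧ w)` for `v, w` in the `i`-th factor, and `R(v ∧ w) = 0` for
`v ∈ ℝ^{n₁}`, `w ∈ ℝ^{n₂}`. -/
def IsProductOf {n₁ n₂ : ℕ} (R : Module.End ℝ (so (n₁ + n₂)))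
    (R₁ : Module.End ℝ (so n₁)) (R₂ : Module.End ℝ (so n₂)) : Prop :=
  (∀ v w : Fin n₁ → ℝ,
     R (wedgeVec (inlV v) (inlV w)) = embSoL (R₁ (wedgeVec v w))) ∧
  (∀ v w : Fin n₂ → ℝ,
     R (wedgeVec (inrV v) (inrV w)) = embSoR (R₂ (wedgeVec v w))) ∧
  (∀ (v : Fin n₁ → ℝ) (w : Fin n₂ → ℝ),
     R (wedgeVec (inlV v) (inrV w)) = 0)

section helpers
variable {n₁ n₂ : ℕ}

@[simp] lemma embSoL_ll (M : so n₁) (i j : Fin n₁) :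
    (embSoL (n₂ := n₂) M).1 (Fin.castAdd n₂ i) (Fin.castAdd n₂ j) = M.1 i j := by
  simp [embSoL]
@[simp] lemma embSoL_r (M : so n₁) (i : Fin n₂) (j : Fin (n₁ + n₂)) :
    (embSoL (n₂ := n₂) M).1 (Fin.natAdd n₁ i) j = 0 := by
  simp [embSoL]
@[simp] lemma embSoL_r' (M : so n₁) (i : Fin (n₁ + n₂)) (j : Fin n₂) :
    (embSoL (n₂ := n₂) M).1 i (Fin.natAdd n₁ j) = 0 := by
  simp [embSoL]
@[simp] lemma embSoR_rr (M : so n₂) (i j : Fin n₂) :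
    (embSoR (n₁ := n₁) M).1 (Fin.natAdd n₁ i) (Fin.natAdd n₁ j) = M.1 i j := by
  simp [embSoR]
@[simp] lemma embSoR_l (M : so n₂) (i : Fin n₁) (j : Fin (n₁ + n₂)) :
    (embSoR (n₁ := n₁) M).1 (Fin.castAdd n₂ i) j = 0 := by
  simp [embSoR]
@[simp] lemma embSoR_l' (M : so n₂) (i : Fin (n₁ + n₂)) (j : Fin n₁) :
    (embSoR (n₁ := n₁) M).1 i (Fin.castAdd n₂ j) = 0 := by
  simp [embSoR]
@[simp] lemma inlV_l (v : Fin n₁ → ℝ) (i : Fin n₁) :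
    inlV (n₂ := n₂) v (Fin.castAdd n₂ i) = v i := by simp [inlV]
@[simp] lemma inlV_r (v : Fin n₁ → ℝ) (i : Fin n₂) :
    inlV (n₂ := n₂) v (Fin.natAdd n₁ i) = 0 := by simp [inlV]
@[simp] lemma inrV_l (v : Fin n₂ → ℝ) (i : Fin n₁) :
    inrV (n₁ := n₁) v (Fin.castAdd n₂ i) = 0 := by simp [inrV]
@[simp] lemma inrV_r (v : Fin n₂ → ℝ) (i : Fin n₂) :
    inrV (n₁ := n₁) v (Fin.natAdd n₁ i) = v i := by simp [inrV]

lemma so_ext_add {X Y : so (n₁ + n₂)}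
    (h1 : ∀ i j, X.1 (Fin.castAdd n₂ i) (Fin.castAdd n₂ j) = Y.1 (Fin.castAdd n₂ i) (Fin.castAdd n₂ j))
    (h2 : ∀ i j, X.1 (Fin.castAdd n₂ i) (Fin.natAdd n₁ j) = Y.1 (Fin.castAdd n₂ i) (Fin.natAdd n₁ j))
    (h3 : ∀ i j, X.1 (Fin.natAdd n₁ i) (Fin.castAdd n₂ j) = Y.1 (Fin.natAdd n₁ i) (Fin.castAdd n₂ j))
    (h4 : ∀ i j, X.1 (Fin.natAdd n₁ i) (Fin.natAdd n₁ j) = Y.1 (Fin.natAdd n₁ i) (Fin.natAdd n₁ j)) :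
    X = Y := by
  apply Subtype.ext
  ext i j
  refine Fin.addCases (fun i => ?_) (fun i => ?_) i <;>
  refine Fin.addCases (fun j => ?_) (fun j => ?_) j
  exacts [h1 i j, h2 i j, h3 i j, h4 i j]

lemma embSoL_wedge (v w : Fin n₁ → ℝ) :
    embSoL (n₂ := n₂) (wedgeVec v w) = wedgeVec (inlV v) (inlV w) := by
  apply so_ext_add <;> intros <;> simp [wedgeVec]
lemma embSoR_wedge (v w : Fin n₂ → ℝ) :
    embSoR (n₁ := n₁) (wedgeVec v w) = wedgeVec (inrV v) (inrV w) := by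
  apply so_ext_add <;> intros <;> simp [wedgeVec]

lemma inlV_std (i : Fin n₁) : inlV (n₂ := n₂) (stdVec i) = stdVec (Fin.castAdd n₂ i) := by
  ext k
  refine Fin.addCases (fun k => ?_) (fun k => ?_) k <;> simp [stdVec, Pi.single_apply, Fin.ext_iff]
  omega
lemma inrV_std (i : Fin n₂) : inrV (n₁ := n₁) (stdVec i) = stdVec (Fin.natAdd n₁ i) := by
  ext k
  refine Fin.addCases (fun k => ?_) (fun k => ?_) k <;> simp [stdVec, Pi.single_apply, Fin.ext_iff]
  omega

/-- Linear versions of the block embeddings. -/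
def embLin : so n₁ →ₗ[ℝ] so (n₁ + n₂) where
  toFun := embSoL
  map_add' X Y := by apply so_ext_add <;> intros <;> simp
  map_smul' c X := by apply so_ext_add <;> intros <;> simp
/-- Linear version of the right block embedding. -/
def embRin : so n₂ →ₗ[ℝ] so (n₁ + n₂) where
  toFun := embSoR
  map_add' X Y := by apply so_ext_add <;> intros <;> simp
  map_smul' c X := by apply so_ext_add <;> intros <;> simp

lemma so_expand {n : ℕ} (X : so n) :
    X = ∑ i, ∑ j, ((1 / 2 : ℝ) * X.1 i j) • wedgeVec (stdVec i) (stdVec j) := by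
  apply Subtype.ext
  ext a b
  have h : ∀ i j, (wedgeVec (stdVec i) (stdVec j) : so n).1 a b =
      (if a = i then 1 else 0) * (if b = j then 1 else 0)
        - (if a = j then 1 else 0) * (if b = i then (1:ℝ) else 0) := by
    intro i j; simp [wedgeVec, stdVec, Pi.single_apply]
  simp only [Submodule.coe_sum, Submodule.coe_smul, Matrix.sum_apply, Matrix.smul_apply, h,
    smul_eq_mul, mul_sub, Finset.sum_sub_distrib]
  simp
  have := so_skew' X a b
  rw [this]; ring

lemma lin_ext {n : ℕ} {M : Type*} [AddCommGroup M] [Module ℝ M] {f g : so n →ₗ[ℝ] M}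
    (h : ∀ v w, f (wedgeVec v w) = g (wedgeVec v w)) (X : so n) : f X = g X := by
  rw [so_expand X]
  simp only [map_sum, map_smul, h]

lemma brkt_LL (X Y : so n₁) :
    brkt (embSoL (n₂ := n₂) X) (embSoL Y) = embSoL (brkt X Y) := by
  apply so_ext_add <;> intros <;> simp [brkt, Matrix.mul_apply, Fin.sum_univ_add]
lemma brkt_RR (X Y : so n₂) :
    brkt (embSoR (n₁ := n₁) X) (embSoR Y) = embSoR (brkt X Y) := by
  apply so_ext_add <;> intros <;> simp [brkt, Matrix.mul_apply, Fin.sum_univ_add]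
lemma brkt_LR (X : so n₁) (Y : so n₂) : brkt (embSoL X) (embSoR Y) = 0 := by
  apply so_ext_add <;> intros <;> simp [brkt, Matrix.mul_apply, Fin.sum_univ_add]
lemma brkt_RL (X : so n₁) (Y : so n₂) : brkt (embSoR Y) (embSoL X) = 0 := by
  apply so_ext_add <;> intros <;> simp [brkt, Matrix.mul_apply, Fin.sum_univ_add]
lemma brkt_zero_l {n : ℕ} (X : so n) : brkt 0 X = 0 := by
  apply Subtype.ext; simp [brkt]
lemma brkt_zero_r {n : ℕ} (X : so n) : brkt X 0 = 0 := by
  apply Subtype.ext; simp [brkt]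
lemma ip_zero_l {n : ℕ} (X : so n) : ip 0 X = 0 := by simp [ip]

lemma ip_LL (X Y : so n₁) : ip (embSoL (n₂ := n₂) X) (embSoL Y) = ip X Y := by
  simp [ip, Matrix.trace, Matrix.mul_apply, Fin.sum_univ_add]
lemma ip_RR (X Y : so n₂) : ip (embSoR (n₁ := n₁) X) (embSoR Y) = ip X Y := by
  simp [ip, Matrix.trace, Matrix.mul_apply, Fin.sum_univ_add]
lemma ip_LR (X : so n₁) (Y : so n₂) : ip (embSoL X) (embSoR Y) = 0 := by
  simp [ip, Matrix.trace, Matrix.mul_apply, Fin.sum_univ_add]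
lemma ip_RL (X : so n₁) (Y : so n₂) : ip (embSoR Y) (embSoL X) = 0 := by
  simp [ip, Matrix.trace, Matrix.mul_apply, Fin.sum_univ_add]
lemma ip_Lm (X : so n₁) (v : Fin n₁ → ℝ) (w : Fin n₂ → ℝ) :
    ip (embSoL X) (wedgeVec (inlV v) (inrV w)) = 0 := by
  simp [ip, Matrix.trace, Matrix.mul_apply, Fin.sum_univ_add, wedgeVec]
lemma ip_Rm (X : so n₂) (v : Fin n₁ → ℝ) (w : Fin n₂ → ℝ) :
    ip (embSoR X) (wedgeVec (inlV v) (inrV w)) = 0 := by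
  simp [ip, Matrix.trace, Matrix.mul_apply, Fin.sum_univ_add, wedgeVec]

lemma sum_pairs_eq {n : ℕ} {M : Type*} [AddCommMonoid M] (F : Fin n × Fin n → M) :
    ∑ p ∈ pairs n, F p = ∑ i, ∑ j, if i < j then F (i, j) else 0 := by
  rw [pairs, Finset.sum_filter, Fintype.sum_prod_type]

lemma sum_pairs_add {M : Type*} [AddCommMonoid M]
    (F : Fin (n₁ + n₂) × Fin (n₁ + n₂) → M)
    (h : ∀ i j, F (Fin.castAdd n₂ i, Fin.natAdd n₁ j) = 0) :
    ∑ p ∈ pairs (n₁ + n₂), F p =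
      ∑ p ∈ pairs n₁, F (Fin.castAdd n₂ p.1, Fin.castAdd n₂ p.2) +
      ∑ p ∈ pairs n₂, F (Fin.natAdd n₁ p.1, Fin.natAdd n₁ p.2) := by
  have h' : ∀ (i : Fin n₂) (j : Fin n₁), ¬ (Fin.natAdd n₁ i < Fin.castAdd n₂ j) := by
    intro i j; rw [Fin.lt_def]; simp; omega
  have h1 : ∀ (i j : Fin n₁), Fin.castAdd n₂ i < Fin.castAdd n₂ j ↔ i < j := by
    intro i j; rw [Fin.lt_def, Fin.lt_def]; simp
  have h2 : ∀ (i j : Fin n₂), Fin.natAdd n₁ i < Fin.natAdd n₁ j ↔ i < j := by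
    intro i j; rw [Fin.lt_def, Fin.lt_def]; simp
  simp only [sum_pairs_eq, Fin.sum_univ_add, h, h', h1, h2, ite_self, if_false,
    Finset.sum_const_zero, add_zero, zero_add]

lemma omega_L (i j : Fin n₁) :
    omegaB (Fin.castAdd n₂ i, Fin.castAdd n₂ j) = embSoL (omegaB (i, j)) := by
  simp only [omegaB, embSoL_wedge, inlV_std]
lemma omega_R (i j : Fin n₂) :
    omegaB (Fin.natAdd n₁ i, Fin.natAdd n₁ j) = embSoR (omegaB (i, j)) := by
  simp only [omegaB, embSoR_wedge, inrV_std]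

lemma sharp_apply {n : ℕ} (A B : Module.End ℝ (so n)) (φ : so n) :
    sharp A B φ = (1 / 2 : ℝ) • ∑ p ∈ pairs n, ∑ q ∈ pairs n,
      ip (brkt (A (omegaB p)) (B (omegaB q))) φ • brkt (omegaB p) (omegaB q) := by
  simp [sharp, LinearMap.sum_apply, ipL]

variable {R : Module.End ℝ (so (n₁ + n₂))} {R₁ : Module.End ℝ (so n₁)} {R₂ : Module.End ℝ (so n₂)}

lemma R_L (h : IsProductOf R R₁ R₂) (X : so n₁) : R (embSoL X) = embSoL (R₁ X) := by
  refine lin_ext (f := R ∘ₗ embLin) (g := embLin ∘ₗ R₁) (fun v w => ?_) X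
  change R (embSoL _) = embSoL _
  rw [embSoL_wedge, h.1]
lemma R_R (h : IsProductOf R R₁ R₂) (X : so n₂) : R (embSoR X) = embSoR (R₂ X) := by
  refine lin_ext (f := R ∘ₗ embRin) (g := embRin ∘ₗ R₂) (fun v w => ?_) X
  change R (embSoR _) = embSoR _
  rw [embSoR_wedge, h.2.1]

lemma sharp_prod (h : IsProductOf R R₁ R₂) (φ : so (n₁ + n₂)) :
    sharp R R φ =
      (1 / 2 : ℝ) • (∑ p ∈ pairs n₁, ∑ q ∈ pairs n₁,
        ip (embSoL (brkt (R₁ (omegaB p)) (R₁ (omegaB q)))) φ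
          • embLin (brkt (omegaB p) (omegaB q))) +
      (1 / 2 : ℝ) • (∑ p ∈ pairs n₂, ∑ q ∈ pairs n₂,
        ip (embSoR (brkt (R₂ (omegaB p)) (R₂ (omegaB q)))) φ
          • embRin (brkt (omegaB p) (omegaB q))) := by
  have hm : ∀ i j, R (omegaB (Fin.castAdd n₂ i, Fin.natAdd n₁ j)) = 0 := by
    intro i j
    have := h.2.2 (stdVec i) (stdVec j)
    rwa [inlV_std, inrV_std] at this
  have z : ∀ p i j, ip (brkt (R p) (R (omegaB (Fin.castAdd n₂ i, Fin.natAdd n₁ j)))) φ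
      • brkt p (omegaB (Fin.castAdd n₂ i, Fin.natAdd n₁ j)) = 0 := by
    intro p i j; rw [hm, brkt_zero_r, ip_zero_l, zero_smul]
  rw [sharp_apply, ← smul_add]
  congr 1
  rw [sum_pairs_add]
  · congr 1
    · refine Finset.sum_congr rfl fun p _ => ?_
      rw [sum_pairs_add _ (fun i j => z _ i j)]
      simp only [omega_L, omega_R, R_L h, R_R h, brkt_LL, brkt_LR, smul_zero,
        Finset.sum_const_zero, add_zero]
      rfl
    · refine Finset.sum_congr rfl fun p _ => ?_
      rw [sum_pairs_add _ (fun i j => z _ i j)]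
      simp only [omega_L, omega_R, R_L h, R_R h, brkt_RR, brkt_RL, smul_zero,
        Finset.sum_const_zero, zero_add]
      rfl
  · intro i j
    refine Finset.sum_eq_zero fun q _ => ?_
    rw [hm, brkt_zero_l, ip_zero_l, zero_smul]

lemma Q_prod (h : IsProductOf R R₁ R₂) : IsProductOf (Qop R) (Qop R₁) (Qop R₂) := by
  refine ⟨fun v w => ?_, fun v w => ?_, fun v w => ?_⟩
  · rw [← embSoL_wedge]
    change R (R _) + sharp R R _ = embLin (R₁ (R₁ _) + sharp R₁ R₁ _)
    rw [R_L h, R_L h, sharp_prod h, sharp_apply, map_add, map_smul]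
    simp only [ip_LL, ip_RL, zero_smul, Finset.sum_const_zero, smul_zero, add_zero, map_sum,
      map_smul]
    rfl
  · rw [← embSoR_wedge]
    change R (R _) + sharp R R _ = embRin (R₂ (R₂ _) + sharp R₂ R₂ _)
    rw [R_R h, R_R h, sharp_prod h, sharp_apply, map_add, map_smul]
    simp only [ip_RR, ip_LR, zero_smul, Finset.sum_const_zero, smul_zero, zero_add, map_sum,
      map_smul]
    rfl
  · change R (R _) + sharp R R _ = 0
    rw [h.2.2, sharp_prod h]
    simp only [ip_Lm, ip_Rm, zero_smul, Finset.sum_const_zero, smul_zero, add_zero, map_zero]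

end helpers

/-- `Q` preserves the product structure: if
`R = R₁ + R₂ ∈ S²_B(⋀²ℝ^{n₁+n₂})` is a product curvature operator, then
`Q(R) = Q(R₁) + Q(R₂)` is the product curvature operator of `Q(R₁)` and `Q(R₂)`
(computed in `S²_B(⋀²ℝ^{n₁})` and `S²_B(⋀²ℝ^{n₂})` respectively). -/
theorem stmt11 (n₁ n₂ : ℕ) (R : Module.End ℝ (so (n₁ + n₂)))
    (R₁ : Module.End ℝ (so n₁)) (R₂ : Module.End ℝ (so n₂))
    (hACO : IsACO R) (hACO₁ : IsACO R₁) (hACO₂ : IsACO R₂)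
    (hprod : IsProductOf R R₁ R₂) :
    IsProductOf (Qop R) (Qop R₁) (Qop R₂) := by
  exact Q_prod hprod
end
end

section
/- If R ∈ S²_B(⋀²ℝⁿ) is an Einstein algebraic curvature operator (Ric(R) is a scalar multiple of the identity of ℝⁿ), then Q(R) is also Einstein; moreover if R is Ricci-flat (Ric(R) = 0), then Q(R) is Ricci-flat. -/
open scoped BigOperators
open Matrix Filter

noncomputable section

lemma ip_wedge_std {n : ℕ} (X : so n) (i j : Fin n) :
    ip X (wedgeVec (stdVec i) (stdVec j)) = X.1 i j := by
  have h := so_skew' X i j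
  simp [ip, wedgeVec, stdVec, Matrix.trace, Matrix.mul_apply, Pi.single_apply, mul_sub,
    Finset.sum_sub_distrib, h]
  ring

lemma wedge_anti {n : ℕ} (x y : Fin n → ℝ) : wedgeVec x y = - wedgeVec y x := by
  apply Subtype.ext
  ext i j
  simp [wedgeVec]

lemma ip_anti_left {n : ℕ} (X Y : so n) : ip (-X) Y = - ip X Y := by
  simp [ip]

lemma brkt_neg_left {n : ℕ} (X Y : so n) : brkt (-X) Y = - brkt X Y := by
  apply Subtype.ext
  simp [brkt]
  abel

lemma brkt_neg_right {n : ℕ} (X Y : so n) : brkt X (-Y) = - brkt X Y := by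
  apply Subtype.ext
  simp [brkt]
  abel

lemma brkt_swap {n : ℕ} (X Y : so n) : brkt X Y = - brkt Y X := by
  apply Subtype.ext
  simp [brkt]

lemma sum_pairs_anti {n : ℕ} (A w : Fin n → Fin n → ℝ) (hA : ∀ a b, A a b = - A b a) :
    ∑ p ∈ pairs n, A p.1 p.2 * (w p.1 p.2 - w p.2 p.1) = ∑ a, ∑ b, A a b * w a b := by
  have h0 : ∀ a, A a a = 0 := fun a => by linarith [hA a a]
  have h1 : ∑ p ∈ pairs n, A p.1 p.2 * (w p.1 p.2 - w p.2 p.1)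
      = ∑ a, ∑ b, (if a < b then A a b * w a b else 0)
        + ∑ a, ∑ b, (if a < b then A b a * w b a else 0) := by
    rw [pairs, Finset.sum_filter, Fintype.sum_prod_type, ← Finset.sum_add_distrib]
    refine Finset.sum_congr rfl fun a _ => ?_
    rw [← Finset.sum_add_distrib]
    refine Finset.sum_congr rfl fun b _ => ?_
    split_ifs
    · simp only [hA b a]; ring
    · simp
  rw [h1, Finset.sum_comm (f := fun a b => if a < b then A b a * w b a else 0),
    ← Finset.sum_add_distrib]
  refine Finset.sum_congr rfl fun a _ => ?_
  rw [← Finset.sum_add_distrib]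
  refine Finset.sum_congr rfl fun b _ => ?_
  rcases lt_trichotomy a b with h | h | h
  · simp [h, h.le, not_lt.mpr h.le]
  · subst h; simp [h0]
  · simp [h, not_lt.mpr h.le]

/-- Matrix units. -/
def mU {n : ℕ} (a b : Fin n) : Matrix (Fin n) (Fin n) ℝ := Matrix.single a b 1

lemma omegaB_val {n : ℕ} (p : Fin n × Fin n) : (omegaB p).1 = mU p.1 p.2 - mU p.2 p.1 := by
  ext i j
  simp only [omegaB, wedgeVec, stdVec, mU, Matrix.single, Pi.single_apply, Matrix.of_apply,
    Matrix.sub_apply]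
  by_cases h1 : i = p.1 <;> by_cases h2 : j = p.2 <;> by_cases h3 : i = p.2 <;>
    by_cases h4 : j = p.1 <;> simp_all [eq_comm]

lemma mU_mul {n : ℕ} (a b c d j k : Fin n) :
    (mU a b * mU c d) j k = if a = j then (if b = c then (if d = k then 1 else 0) else 0) else 0 := by
  by_cases h : b = c
  · subst h
    rw [mU, mU, Matrix.single_mul_single_same, Matrix.single_apply]
    by_cases h1 : a = j <;> by_cases h2 : d = k <;> simp [h1, h2]
  · simp [mU, h]

lemma sharp_apply_s12 {n : ℕ} (R : Module.End ℝ (so n)) (φ : so n) (j k : Fin n) :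
    (sharp R R φ).1 j k
      = ∑ b, ip (brkt (R (omegaB (j, b))) (R (omegaB (b, k)))) φ := by
  set F : Fin n → Fin n → Fin n → Fin n → ℝ := fun a b c d =>
    ip (brkt (R (omegaB (a, b))) (R (omegaB (c, d)))) φ with hF
  have ho : ∀ a b : Fin n, omegaB (a, b) = - omegaB (b, a) := fun a b => wedge_anti _ _
  have hF1 : ∀ a b c d, F a b c d = - F b a c d := fun a b c d => by
    simp only [hF]
    rw [ho a b, map_neg, brkt_neg_left, ip_anti_left]
  have hF2 : ∀ a b c d, F a b c d = - F a b d c := fun a b c d => by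
    simp only [hF]
    rw [ho c d, map_neg, brkt_neg_right, ip_anti_left]
  have hF3 : ∀ a b c d, F a b c d = - F c d a b := fun a b c d => by
    simp only [hF]
    rw [brkt_swap, ip_anti_left]
  set E : Fin n → Fin n → Fin n → Fin n → ℝ := fun a b c d =>
    (mU a b * mU c d) j k - (mU c d * mU a b) j k with hE
  have h1 : (sharp R R φ).1 j k = (1 / 2 : ℝ) * ∑ p ∈ pairs n, ∑ q ∈ pairs n,
      F p.1 p.2 q.1 q.2 * ((E p.1 p.2 q.1 q.2 - E p.2 p.1 q.1 q.2)
        - (E p.1 p.2 q.2 q.1 - E p.2 p.1 q.2 q.1)) := by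
    simp only [sharp, LinearMap.smul_apply, LinearMap.sum_apply, LinearMap.smulRight_apply,
      Submodule.coe_smul, Submodule.coe_sum, Matrix.smul_apply, Matrix.sum_apply, smul_eq_mul]
    congr 1
    refine Finset.sum_congr rfl fun p _ => Finset.sum_congr rfl fun q _ => ?_
    change F p.1 p.2 q.1 q.2 * _ = _
    congr 1
    simp only [brkt, omegaB_val, hE, sub_mul, mul_sub, Matrix.sub_apply]
    ring
  have h2 : ∀ p : Fin n × Fin n, ∑ q ∈ pairs n,
      F p.1 p.2 q.1 q.2 * ((E p.1 p.2 q.1 q.2 - E p.2 p.1 q.1 q.2)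
        - (E p.1 p.2 q.2 q.1 - E p.2 p.1 q.2 q.1))
      = ∑ c, ∑ d, F p.1 p.2 c d * (E p.1 p.2 c d - E p.2 p.1 c d) := fun p =>
    sum_pairs_anti (fun c d => F p.1 p.2 c d) (fun c d => E p.1 p.2 c d - E p.2 p.1 c d)
      (fun c d => hF2 _ _ _ _)
  have h3 : ∀ c d : Fin n, ∑ p ∈ pairs n, F p.1 p.2 c d * (E p.1 p.2 c d - E p.2 p.1 c d)
      = ∑ a, ∑ b, F a b c d * E a b c d := fun c d =>
    sum_pairs_anti (fun a b => F a b c d) (fun a b => E a b c d) (fun a b => hF1 _ _ _ _)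
  rw [h1, Finset.sum_congr rfl fun p _ => h2 p, Finset.sum_comm]
  have h5 : ∀ c : Fin n, ∑ p ∈ pairs n, ∑ d, F p.1 p.2 c d * (E p.1 p.2 c d - E p.2 p.1 c d)
      = ∑ d, ∑ a, ∑ b, F a b c d * E a b c d := fun c => by
    rw [Finset.sum_comm]
    exact Finset.sum_congr rfl fun d _ => h3 c d
  rw [Finset.sum_congr rfl fun c _ => h5 c]
  simp only [hE, mul_sub, Finset.sum_sub_distrib, mU_mul]
  simp only [mul_ite, mul_one, mul_zero, Finset.sum_ite_eq, Finset.sum_ite_eq',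
    Finset.mem_univ, if_true, Finset.sum_ite_irrel, Finset.sum_const_zero]
  have h4 : ∀ x, F x k j x = - F j x x k := fun x => hF3 _ _ _ _
  simp only [h4, Finset.sum_neg_distrib]
  ring

lemma ric_Qop {n : ℕ} (R : Module.End ℝ (so n)) (hR : IsACO R) (i j : Fin n) :
    RicM (Qop R) i j = ∑ b, ∑ m, (R (omegaB (i, m))).1 j b * RicM R b m := by
  obtain ⟨hs, hb⟩ := hR
  set r : Fin n → Fin n → Fin n → Fin n → ℝ := fun a b c d => (R (omegaB (a, b))).1 c d with hr
  have ho : ∀ a b : Fin n, omegaB (a, b) = - omegaB (b, a) := fun a b => wedge_anti _ _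
  have r1 : ∀ a b c d, r a b c d = - r b a c d := fun a b c d => by
    simp only [hr]
    rw [ho a b, map_neg]; rfl
  have r2 : ∀ a b c d, r a b c d = - r a b d c := fun a b c d => so_skew' _ _ _
  have ipc : ∀ X Y : so n, ip X Y = ip Y X := fun X Y => by
    simp only [ip]; rw [Matrix.trace_mul_comm]
  have ipr : ∀ a b c d, ip (R (wedgeVec (stdVec a) (stdVec b))) (wedgeVec (stdVec c) (stdVec d))
      = r a b c d := fun a b c d => ip_wedge_std _ _ _
  have r3 : ∀ a b c d, r a b c d = r c d a b := fun a b c d => by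
    rw [← ipr, ← ipr, hs, ipc]
  have r4 : ∀ a b c d, r a b c d + r b c a d + r c a b d = 0 := fun a b c d => by
    have := hb (stdVec a) (stdVec b) (stdVec c) (stdVec d)
    simpa only [ipr] using this
  have hric : ∀ i j, RicM R i j = ∑ k, r i k j k := fun i j => by
    simp only [RicM, Matrix.of_apply, ipr]
  have hsq : ∀ k, ip ((R * R) (wedgeVec (stdVec i) (stdVec k))) (wedgeVec (stdVec j) (stdVec k))
      = (1 / 2) * ∑ p, ∑ q, r i k p q * r j k p q := fun k => by
    rw [Module.End.mul_apply, hs]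
    change -(1/2) * Matrix.trace ((R (omegaB (i,k))).1 * (R (omegaB (j,k))).1) = _
    simp only [Matrix.trace, Matrix.diag_apply, Matrix.mul_apply]
    change -(1/2) * ∑ p, ∑ q, r i k p q * r j k q p = _
    have : ∀ p q, r i k p q * r j k q p = - (r i k p q * r j k p q) := fun p q => by
      rw [r2 j k q p]; ring
    simp only [this, Finset.sum_neg_distrib]
    ring
  have hsh : ∀ k, ip (sharp R R (wedgeVec (stdVec i) (stdVec k))) (wedgeVec (stdVec j) (stdVec k))
      = ∑ b, ∑ m, (r j b i m * r b k m k - r b k i m * r j b m k) := fun k => by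
    rw [ip_wedge_std, sharp_apply_s12]
    refine Finset.sum_congr rfl fun b _ => ?_
    rw [ip_wedge_std]
    simp only [brkt, Matrix.sub_apply, Matrix.mul_apply, ← Finset.sum_sub_distrib]
    rfl
  have hQ : RicM (Qop R) i j = ∑ k, ((1 / 2) * ∑ p, ∑ q, r i k p q * r j k p q
      + ∑ b, ∑ m, (r j b i m * r b k m k - r b k i m * r j b m k)) := by
    simp only [RicM, Matrix.of_apply]
    refine Finset.sum_congr rfl fun k _ => ?_
    rw [← hsq, ← hsh, Qop, LinearMap.add_apply, ip_wedge_std, ip_wedge_std, ip_wedge_std]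
    rfl
  set U := ∑ k, ∑ p, ∑ q, r i k p q * r j k p q with hU
  set T := ∑ k, ∑ b, ∑ m, r b k i m * r j b m k with hT
  have hT1 : T = ∑ m, ∑ b, ∑ k, r i m b k * r j b m k := by
    rw [hT, Finset.sum_comm, Finset.sum_congr rfl fun b _ => Finset.sum_comm, Finset.sum_comm]
    simp only [fun b k m => r3 b k i m]
  have hT2 : T = ∑ m, ∑ b, ∑ k, r i m k b * r j k m b := by
    rw [hT1]
    exact Finset.sum_congr rfl fun m _ => Finset.sum_comm
  have hTU : T + T = U := by
    nth_rewrite 1 [hT1]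
    rw [hT2, hU]
    simp only [← Finset.sum_add_distrib]
    refine Finset.sum_congr rfl fun m _ => Finset.sum_congr rfl fun b _ =>
      Finset.sum_congr rfl fun k _ => ?_
    rw [r2 i m k b]
    have e : r j b m k - r j k m b = r j m b k := by
      have a1 := r4 j b m k
      have a2 := r3 b m j k
      have a3 := r2 j k b m
      have a4 := r1 m j b k
      linarith
    rw [← e]; ring
  rw [hQ, Finset.sum_add_distrib, ← Finset.mul_sum]
  simp only [Finset.sum_sub_distrib]
  rw [← hU, ← hT, ← hTU]
  have hV : ∑ k, ∑ b, ∑ m, r j b i m * r b k m k = ∑ b, ∑ m, r i m j b * RicM R b m := by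
    rw [Finset.sum_comm]
    refine Finset.sum_congr rfl fun b _ => ?_
    rw [Finset.sum_comm]
    refine Finset.sum_congr rfl fun m _ => ?_
    rw [hric, Finset.mul_sum, r3 j b i m]
  rw [hV]
  ring

lemma ric_Qop_einstein {n : ℕ} (R : Module.End ℝ (so n)) (hR : IsACO R) (c : ℝ)
    (h : RicM R = c • (1 : Matrix (Fin n) (Fin n) ℝ)) :
    RicM (Qop R) = (c * c) • (1 : Matrix (Fin n) (Fin n) ℝ) := by
  ext i j
  rw [ric_Qop R hR]
  have h2 : RicM R i j = ∑ k, (R (omegaB (i, k))).1 j k := by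
    simp only [RicM, Matrix.of_apply, ip_wedge_std]; rfl
  rw [h] at h2 ⊢
  simp only [Matrix.smul_apply, Matrix.one_apply, smul_eq_mul, mul_ite, mul_one, mul_zero,
    Finset.sum_ite_eq, Finset.mem_univ, if_true] at h2 ⊢
  rw [← Finset.sum_mul, ← h2]
  split_ifs <;> simp

/-- If `R ∈ S²_B(⋀²ℝⁿ)` is Einstein then `Q(R)` is Einstein, and if
`R` is Ricci-flat then `Q(R)` is Ricci-flat. -/
theorem stmt12 (n : ℕ) (R : Module.End ℝ (so n)) (hACO : IsACO R) :
    (IsEinstein R → IsEinstein (Qop R)) ∧ (RicM R = 0 → RicM (Qop R) = 0) := by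
  refine ⟨fun ⟨c, hc⟩ => ⟨c * c, ric_Qop_einstein R hACO c hc⟩, fun h => ?_⟩
  have := ric_Qop_einstein R hACO 0 (by rw [h, zero_smul])
  rw [this]; simp
end
end
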